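/- Let θ be a ℂ-algebra automorphism of V = Ǔ^{≥0}_{r,s}(sl_3) and suppose that θ(K_l) = a_l K_{σ(l)} for l = 1, 2, where σ is a permutation of {1, 2} and a_1, a_2 ∈ ℂ^*. Then there exist scalars b_1, b_2 ∈ ℂ^* and integers m_1, n_1, m_2, n_2 such that θ(E_l) = b_l K_1^{m_l} K_2^{n_l} E_{σ(l)} for l = 1, 2. -/

import Mathlib

/-!
Conjugation by `K₁` gives a word with `p` letters `E₁` and `q` letters `E₂` the weight
`(ρσ⁻²)^p (ρσ)^q = ρ^(p+q) σ^(q-2p)`. Since `ρ` and `σ` are multiplicatively independent, this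
scalar determines `(p, q)`, so the eigenspaces of conjugation by `K₁` are the bigraded components.
In particular the weight spaces of `E₁` and `E₂` are `T E₁` and `T E₂`, where `T` is the torus
subalgebra generated by `K₁^{±1}, K₂^{±1}` (`weight_E₁`, `weight_E₂`), and `ρ⁻¹σ⁻¹`, which would
need `p + q = -1`, is not a weight (`weight_none`).

If `τ` is the transposition, applying `θ` to `K₂E₁ = ρ⁻¹σ⁻¹E₁K₂` shows that `θ(E₁)` has
`K₁`-weight `ρ⁻¹σ⁻¹`; hence `θ(E₁) = 0`, which is impossible. So `τ` is the identity, `θ` and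
`θ⁻¹` preserve weights and the torus, and `θ(E_l) = f E_l`, `θ⁻¹(E_l) = g E_l` with `f, g ∈ T`.
Then `θ(g) f E_l = E_l`. A representation by `3 × 3` matrices over Laurent polynomials (`toMat`)
shows that `T` is a Laurent polynomial ring acting freely on `E_l`, so `f` is a unit of that ring,
that is, a scalar times a monomial (`laurent_unit`, `image_of_weight`).
-/


noncomputable section

open FreeAlgebra

/-- The defining relations of the augmented Hopf algebra `Ǔ^{≥0}_{r,s}(sl₃)` (with
`r = ρ³`, `s = σ³`) as a quotient of the free algebra on six generators:
generator `0` is `E₁`, `1` is `E₂`, `2` is `K₁`, `3` is `K₁⁻¹`, `4` is `K₂`, `5` is `K₂⁻¹`. -/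
inductive VRel (ρ σ : ℂ) : FreeAlgebra ℂ (Fin 6) → FreeAlgebra ℂ (Fin 6) → Prop
  | k1inv : VRel ρ σ (ι ℂ (2 : Fin 6) * ι ℂ 3) 1
  | invk1 : VRel ρ σ (ι ℂ (3 : Fin 6) * ι ℂ 2) 1
  | k2inv : VRel ρ σ (ι ℂ (4 : Fin 6) * ι ℂ 5) 1
  | invk2 : VRel ρ σ (ι ℂ (5 : Fin 6) * ι ℂ 4) 1
  | k1k2 : VRel ρ σ (ι ℂ (2 : Fin 6) * ι ℂ 4) (ι ℂ (4 : Fin 6) * ι ℂ 2)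
  | k1e1 : VRel ρ σ (ι ℂ (2 : Fin 6) * ι ℂ 0) ((ρ * (σ ^ 2)⁻¹) • (ι ℂ (0 : Fin 6) * ι ℂ 2))
  | k1e2 : VRel ρ σ (ι ℂ (2 : Fin 6) * ι ℂ 1) ((ρ * σ) • (ι ℂ (1 : Fin 6) * ι ℂ 2))
  | k2e1 : VRel ρ σ (ι ℂ (4 : Fin 6) * ι ℂ 0) ((ρ⁻¹ * σ⁻¹) • (ι ℂ (0 : Fin 6) * ι ℂ 4))
  | k2e2 : VRel ρ σ (ι ℂ (4 : Fin 6) * ι ℂ 1) ((ρ ^ 2 * σ⁻¹) • (ι ℂ (1 : Fin 6) * ι ℂ 4))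
  | serre1 : VRel ρ σ
      (ι ℂ (0 : Fin 6) * ι ℂ 0 * ι ℂ 1 - (ρ ^ 3 + σ ^ 3) • (ι ℂ (0 : Fin 6) * ι ℂ 1 * ι ℂ 0)
        + (ρ ^ 3 * σ ^ 3) • (ι ℂ (1 : Fin 6) * ι ℂ 0 * ι ℂ 0)) 0
  | serre2 : VRel ρ σ
      (ι ℂ (0 : Fin 6) * ι ℂ 1 * ι ℂ 1 - (ρ ^ 3 + σ ^ 3) • (ι ℂ (1 : Fin 6) * ι ℂ 0 * ι ℂ 1)
        + (ρ ^ 3 * σ ^ 3) • (ι ℂ (1 : Fin 6) * ι ℂ 1 * ι ℂ 0)) 0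

/-- The augmented Hopf algebra `Ǔ^{≥0}_{r,s}(sl₃)`. -/
abbrev Vsl3 (ρ σ : ℂ) := RingQuot (VRel ρ σ)

def vE₁ (ρ σ : ℂ) : Vsl3 ρ σ := RingQuot.mkAlgHom ℂ (VRel ρ σ) (ι ℂ 0)
def vE₂ (ρ σ : ℂ) : Vsl3 ρ σ := RingQuot.mkAlgHom ℂ (VRel ρ σ) (ι ℂ 1)
def K₁ (ρ σ : ℂ) : Vsl3 ρ σ := RingQuot.mkAlgHom ℂ (VRel ρ σ) (ι ℂ 2)
def K₁inv (ρ σ : ℂ) : Vsl3 ρ σ := RingQuot.mkAlgHom ℂ (VRel ρ σ) (ι ℂ 3)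
def K₂ (ρ σ : ℂ) : Vsl3 ρ σ := RingQuot.mkAlgHom ℂ (VRel ρ σ) (ι ℂ 4)
def K₂inv (ρ σ : ℂ) : Vsl3 ρ σ := RingQuot.mkAlgHom ℂ (VRel ρ σ) (ι ℂ 5)
def vE₃ (ρ σ : ℂ) : Vsl3 ρ σ := vE₁ ρ σ * vE₂ ρ σ - σ ^ 3 • (vE₂ ρ σ * vE₁ ρ σ)

/-- Integer powers of `K₁`: for negative `m`, `K₁^m` means `(K₁⁻¹)^(-m)`. -/
def K₁z (ρ σ : ℂ) (m : ℤ) : Vsl3 ρ σ :=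
  if 0 ≤ m then K₁ ρ σ ^ m.toNat else K₁inv ρ σ ^ (-m).toNat

/-- Integer powers of `K₂`: for negative `n`, `K₂^n` means `(K₂⁻¹)^(-n)`. -/
def K₂z (ρ σ : ℂ) (n : ℤ) : Vsl3 ρ σ :=
  if 0 ≤ n then K₂ ρ σ ^ n.toNat else K₂inv ρ σ ^ (-n).toNat

/-- The pair of group-like generators `K₁, K₂` as a family indexed by `Fin 2`. -/
def Kvec (ρ σ : ℂ) : Fin 2 → Vsl3 ρ σ := ![K₁ ρ σ, K₂ ρ σ]

/-- The pair of generators `E₁, E₂` as a family indexed by `Fin 2`. -/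
def Evec (ρ σ : ℂ) : Fin 2 → Vsl3 ρ σ := ![vE₁ ρ σ, vE₂ ρ σ]

/-! ### Relations and units -/

section Relations

variable (ρ σ : ℂ)

lemma rel_k1inv : K₁ ρ σ * K₁inv ρ σ = 1 := by
  simpa [K₁, K₁inv] using RingQuot.mkAlgHom_rel ℂ (VRel.k1inv (ρ := ρ) (σ := σ))

lemma rel_invk1 : K₁inv ρ σ * K₁ ρ σ = 1 := by
  simpa [K₁, K₁inv] using RingQuot.mkAlgHom_rel ℂ (VRel.invk1 (ρ := ρ) (σ := σ))

lemma rel_k2inv : K₂ ρ σ * K₂inv ρ σ = 1 := by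
  simpa [K₂, K₂inv] using RingQuot.mkAlgHom_rel ℂ (VRel.k2inv (ρ := ρ) (σ := σ))

lemma rel_invk2 : K₂inv ρ σ * K₂ ρ σ = 1 := by
  simpa [K₂, K₂inv] using RingQuot.mkAlgHom_rel ℂ (VRel.invk2 (ρ := ρ) (σ := σ))

lemma rel_k1k2 : K₁ ρ σ * K₂ ρ σ = K₂ ρ σ * K₁ ρ σ := by
  simpa [K₁, K₂] using RingQuot.mkAlgHom_rel ℂ (VRel.k1k2 (ρ := ρ) (σ := σ))

lemma rel_k1e1 : K₁ ρ σ * vE₁ ρ σ = (ρ * (σ ^ 2)⁻¹) • (vE₁ ρ σ * K₁ ρ σ) := by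
  simpa only [K₁, vE₁, map_mul, map_smul] using
    RingQuot.mkAlgHom_rel ℂ (VRel.k1e1 (ρ := ρ) (σ := σ))

lemma rel_k1e2 : K₁ ρ σ * vE₂ ρ σ = (ρ * σ) • (vE₂ ρ σ * K₁ ρ σ) := by
  simpa only [K₁, vE₂, map_mul, map_smul] using
    RingQuot.mkAlgHom_rel ℂ (VRel.k1e2 (ρ := ρ) (σ := σ))

lemma rel_k2e1 : K₂ ρ σ * vE₁ ρ σ = (ρ⁻¹ * σ⁻¹) • (vE₁ ρ σ * K₂ ρ σ) := by
  simpa only [K₂, vE₁, map_mul, map_smul] using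
    RingQuot.mkAlgHom_rel ℂ (VRel.k2e1 (ρ := ρ) (σ := σ))

lemma rel_k2e2 : K₂ ρ σ * vE₂ ρ σ = (ρ ^ 2 * σ⁻¹) • (vE₂ ρ σ * K₂ ρ σ) := by
  simpa only [K₂, vE₂, map_mul, map_smul] using
    RingQuot.mkAlgHom_rel ℂ (VRel.k2e2 (ρ := ρ) (σ := σ))

end Relations

/-- A quasi-commutation relation `k e = c e k` with `k` invertible, solved for `e k⁻¹`. -/
lemma mul_inv_of_quasi {V : Type*} [Ring V] [Algebra ℂ V] {k k' e : V} {c : ℂ}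
    (h : k * k' = 1) (h' : k' * k = 1) (he : k * e = c • (e * k)) :
    e * k' = c • (k' * e) := by
  calc e * k' = k' * (k * e) * k' := by rw [← mul_assoc, h', one_mul]
    _ = c • (k' * e * (k * k')) := by
      rw [he]; simp only [mul_smul_comm, smul_mul_assoc, mul_assoc]
    _ = c • (k' * e) := by rw [h, mul_one]

/-- `K₁` as a unit. -/
def K₁u (ρ σ : ℂ) : (Vsl3 ρ σ)ˣ := ⟨K₁ ρ σ, K₁inv ρ σ, rel_k1inv ρ σ, rel_invk1 ρ σ⟩

/-- `K₂` as a unit. -/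
def K₂u (ρ σ : ℂ) : (Vsl3 ρ σ)ˣ := ⟨K₂ ρ σ, K₂inv ρ σ, rel_k2inv ρ σ, rel_invk2 ρ σ⟩

lemma commute_units (ρ σ : ℂ) : Commute (K₁u ρ σ) (K₂u ρ σ) :=
  Units.ext (rel_k1k2 ρ σ)

lemma coe_K₁u_zpow (ρ σ : ℂ) (m : ℤ) : ((K₁u ρ σ ^ m : (Vsl3 ρ σ)ˣ) : Vsl3 ρ σ) = K₁z ρ σ m := by
  obtain ⟨k, rfl | rfl⟩ := m.eq_nat_or_neg
  · simp [K₁z, K₁u]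
  · rcases Nat.eq_zero_or_pos k with rfl | hk
    · simp [K₁z]
    · have : ¬ (0 : ℤ) ≤ -k := by omega
      rw [K₁z, if_neg this, zpow_neg, ← inv_zpow]
      simp [K₁u]

lemma coe_K₂u_zpow (ρ σ : ℂ) (m : ℤ) : ((K₂u ρ σ ^ m : (Vsl3 ρ σ)ˣ) : Vsl3 ρ σ) = K₂z ρ σ m := by
  obtain ⟨k, rfl | rfl⟩ := m.eq_nat_or_neg
  · simp [K₂z, K₂u]
  · rcases Nat.eq_zero_or_pos k with rfl | hk
    · simp [K₂z]
    · have : ¬ (0 : ℤ) ≤ -k := by omega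
      rw [K₂z, if_neg this, zpow_neg, ← inv_zpow]
      simp [K₂u]

/-! ### The torus subalgebra and Laurent polynomials -/

/-- Laurent polynomials over `ℂ` in two variables, as the group algebra of `ℤ × ℤ`. -/
abbrev Laurent₂ := AddMonoidAlgebra ℂ (ℤ × ℤ)

/-- The Laurent monomial with exponents `(m, n)`. -/
def mono (m n : ℤ) : Laurent₂ := AddMonoidAlgebra.single (m, n) 1

lemma mono_mul (m n m' n' : ℤ) : mono m n * mono m' n' = mono (m + m') (n + n') := by
  simp [mono, AddMonoidAlgebra.single_mul_single]

lemma mono_zero : mono 0 0 = 1 := rfl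

/-- Units of the Laurent polynomial ring are scalar multiples of monomials. If `f` or `g` had two
terms, two distinct products of terms in `f * g` would survive, but `1` has only one term. -/
lemma laurent_unit {f g : Laurent₂} (h : f * g = 1) :
    ∃ (b : ℂ) (m n : ℤ), b ≠ 0 ∧ f = b • mono m n := by
  classical
  have hf : f ≠ 0 := by rintro rfl; simp at h
  have hg : g ≠ 0 := by rintro rfl; simp at h
  have hfc : f.coeff.support.Nonempty := by
    rw [Finsupp.support_nonempty_iff]; simpa using hf
  have hgc : g.coeff.support.Nonempty := by
    rw [Finsupp.support_nonempty_iff]; simpa using hg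
  have hle : f.coeff.support.card * g.coeff.support.card ≤ 1 := by
    by_contra! hlt
    obtain ⟨p, hp, q, hq, hpq, up, uq⟩ := TwoUniqueSums.uniqueAdd_of_one_lt_card hlt
    rw [Finset.mem_product] at hp hq
    have key : ∀ r : (ℤ × ℤ) × (ℤ × ℤ), r.1 ∈ f.coeff.support → r.2 ∈ g.coeff.support →
        UniqueAdd f.coeff.support g.coeff.support r.1 r.2 → r.1 + r.2 = 0 := by
      intro r h1 h2 hu
      have := AddMonoidAlgebra.coeff_mul_add_of_uniqueAdd hu
      rw [h] at this
      by_contra hne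
      have h0 : (1 : Laurent₂).coeff (r.1 + r.2) = 0 := by
        rw [AddMonoidAlgebra.one_def]
        simp [AddMonoidAlgebra.coeff_single, Ne.symm hne]
      rw [h0] at this
      exact mul_ne_zero (Finsupp.mem_support_iff.1 h1) (Finsupp.mem_support_iff.1 h2) this.symm
    have e := up hq.1 hq.2 ((key q hq.1 hq.2 uq).trans (key p hp.1 hp.2 up).symm)
    exact hpq (Prod.ext e.1.symm e.2.symm)
  have h1 : f.coeff.support.card = 1 := by
    have := hfc.card_pos
    have := hgc.card_pos
    nlinarith
  obtain ⟨⟨m, n⟩, b, hb, hfb⟩ := Finsupp.card_support_eq_one'.1 h1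
  refine ⟨b, m, n, hb, ?_⟩
  apply AddMonoidAlgebra.coeff_injective
  simp [mono, hfb]

/-- The subalgebra generated by `K₁^{±1}, K₂^{±1}`. -/
def torus (ρ σ : ℂ) : Subalgebra ℂ (Vsl3 ρ σ) :=
  Algebra.adjoin ℂ {K₁ ρ σ, K₁inv ρ σ, K₂ ρ σ, K₂inv ρ σ}

section Torus

variable {ρ σ : ℂ}

lemma K₁_mem : K₁ ρ σ ∈ torus ρ σ := Algebra.subset_adjoin (by simp)
lemma K₁inv_mem : K₁inv ρ σ ∈ torus ρ σ := Algebra.subset_adjoin (by simp)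
lemma K₂_mem : K₂ ρ σ ∈ torus ρ σ := Algebra.subset_adjoin (by simp)
lemma K₂inv_mem : K₂inv ρ σ ∈ torus ρ σ := Algebra.subset_adjoin (by simp)

/-- An element that quasi-commutes with both `K₁` and `K₂` can be moved to the right of the
torus. -/
lemma move_right {e : Vsl3 ρ σ} {c d : ℂ} (hc : c ≠ 0) (hd : d ≠ 0)
    (h1 : K₁ ρ σ * e = c • (e * K₁ ρ σ)) (h2 : K₂ ρ σ * e = d • (e * K₂ ρ σ))
    {x : Vsl3 ρ σ} (hx : x ∈ torus ρ σ) : ∃ t ∈ torus ρ σ, e * x = t * e := by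
  induction hx using Algebra.adjoin_induction with
  | mem x hx =>
    rcases hx with rfl | rfl | rfl | rfl
    · exact ⟨c⁻¹ • K₁ ρ σ, Subalgebra.smul_mem _ K₁_mem _, by
        rw [smul_mul_assoc, h1, smul_smul, inv_mul_cancel₀ hc, one_smul]⟩
    · exact ⟨c • K₁inv ρ σ, Subalgebra.smul_mem _ K₁inv_mem _, by
        rw [smul_mul_assoc, mul_inv_of_quasi (rel_k1inv ρ σ) (rel_invk1 ρ σ) h1]⟩
    · exact ⟨d⁻¹ • K₂ ρ σ, Subalgebra.smul_mem _ K₂_mem _, by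
        rw [smul_mul_assoc, h2, smul_smul, inv_mul_cancel₀ hd, one_smul]⟩
    · exact ⟨d • K₂inv ρ σ, Subalgebra.smul_mem _ K₂inv_mem _, by
        rw [smul_mul_assoc, mul_inv_of_quasi (rel_k2inv ρ σ) (rel_invk2 ρ σ) h2]⟩
  | algebraMap r =>
    exact ⟨algebraMap _ _ r, Subalgebra.algebraMap_mem _ _, (Algebra.commutes r e).symm⟩
  | add x y _ _ ihx ihy =>
    obtain ⟨t, ht, e1⟩ := ihx
    obtain ⟨u, hu, e2⟩ := ihy
    exact ⟨t + u, add_mem ht hu, by rw [mul_add, e1, e2, add_mul]⟩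
  | mul x y _ _ ihx ihy =>
    obtain ⟨t, ht, e1⟩ := ihx
    obtain ⟨u, hu, e2⟩ := ihy
    exact ⟨t * u, mul_mem ht hu, by rw [← mul_assoc, e1, mul_assoc, e2, mul_assoc]⟩

/-- An endomorphism that rescales `K₁` and `K₂` preserves the torus. -/
lemma map_torus (θ : Vsl3 ρ σ →ₐ[ℂ] Vsl3 ρ σ) {a d : ℂ} (ha : a ≠ 0) (hd : d ≠ 0)
    (h1 : θ (K₁ ρ σ) = a • K₁ ρ σ) (h2 : θ (K₂ ρ σ) = d • K₂ ρ σ)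
    {x : Vsl3 ρ σ} (hx : x ∈ torus ρ σ) : θ x ∈ torus ρ σ := by
  have hi1 : θ (K₁inv ρ σ) = a⁻¹ • K₁inv ρ σ := by
    refine left_inv_eq_right_inv (a := θ (K₁ ρ σ)) ?_ ?_
    · rw [← map_mul, rel_invk1, map_one]
    · rw [h1, smul_mul_smul_comm, mul_inv_cancel₀ ha, rel_k1inv, one_smul]
  have hi2 : θ (K₂inv ρ σ) = d⁻¹ • K₂inv ρ σ := by
    refine left_inv_eq_right_inv (a := θ (K₂ ρ σ)) ?_ ?_
    · rw [← map_mul, rel_invk2, map_one]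
    · rw [h2, smul_mul_smul_comm, mul_inv_cancel₀ hd, rel_k2inv, one_smul]
  have hle : torus ρ σ ≤ (torus ρ σ).comap θ := by
    refine Algebra.adjoin_le ?_
    rintro x (rfl | rfl | rfl | rfl)
    · exact (h1 ▸ Subalgebra.smul_mem _ K₁_mem _ : θ _ ∈ torus ρ σ)
    · exact (hi1 ▸ Subalgebra.smul_mem _ K₁inv_mem _ : θ _ ∈ torus ρ σ)
    · exact (h2 ▸ Subalgebra.smul_mem _ K₂_mem _ : θ _ ∈ torus ρ σ)
    · exact (hi2 ▸ Subalgebra.smul_mem _ K₂inv_mem _ : θ _ ∈ torus ρ σ)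
  exact hle hx

end Torus

/-- Evaluation of Laurent polynomials at `(K₁, K₂)`. -/
def evalK (ρ σ : ℂ) : Laurent₂ →ₐ[ℂ] Vsl3 ρ σ :=
  AddMonoidAlgebra.lift ℂ (Vsl3 ρ σ) (ℤ × ℤ)
    { toFun := fun p =>
        ((K₁u ρ σ ^ p.toAdd.1 * K₂u ρ σ ^ p.toAdd.2 : (Vsl3 ρ σ)ˣ) : Vsl3 ρ σ)
      map_one' := by simp
      map_mul' := fun p q => by
        rw [← Units.val_mul]
        congr 1
        have h := ((commute_units ρ σ).zpow_zpow q.toAdd.1 p.toAdd.2).eq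
        simp only [toAdd_mul, Prod.fst_add, Prod.snd_add, zpow_add]
        rw [mul_assoc, mul_assoc, ← mul_assoc (K₁u ρ σ ^ q.toAdd.1), h]
        simp only [mul_assoc] }

lemma evalK_mono (ρ σ : ℂ) (m n : ℤ) : evalK ρ σ (mono m n) = K₁z ρ σ m * K₂z ρ σ n := by
  simp [evalK, mono, coe_K₁u_zpow, coe_K₂u_zpow]

/-! ### Two homomorphisms out of the algebra -/

/-- The quotient onto the torus: `E₁, E₂ ↦ 0` and `K₁, K₂` go to the two variables. -/
def toLaurent (ρ σ : ℂ) : Vsl3 ρ σ →ₐ[ℂ] Laurent₂ :=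
  RingQuot.liftAlgHom ℂ ⟨FreeAlgebra.lift ℂ ![0, 0, mono 1 0, mono (-1) 0, mono 0 1, mono 0 (-1)], by
    intro x y h
    cases h <;> simp [mono_mul, mono_zero]⟩

lemma toLaurent_K₁ (ρ σ : ℂ) : toLaurent ρ σ (K₁ ρ σ) = mono 1 0 := by
  simp [toLaurent, K₁]
lemma toLaurent_K₁inv (ρ σ : ℂ) : toLaurent ρ σ (K₁inv ρ σ) = mono (-1) 0 := by
  simp [toLaurent, K₁inv]
lemma toLaurent_K₂ (ρ σ : ℂ) : toLaurent ρ σ (K₂ ρ σ) = mono 0 1 := by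
  simp [toLaurent, K₂]
lemma toLaurent_K₂inv (ρ σ : ℂ) : toLaurent ρ σ (K₂inv ρ σ) = mono 0 (-1) := by
  simp [toLaurent, K₂inv]

lemma evalK_toLaurent {ρ σ : ℂ} {x : Vsl3 ρ σ} (hx : x ∈ torus ρ σ) :
    evalK ρ σ (toLaurent ρ σ x) = x := by
  have hle : torus ρ σ ≤ AlgHom.equalizer ((evalK ρ σ).comp (toLaurent ρ σ)) (AlgHom.id ℂ _) := by
    refine Algebra.adjoin_le ?_
    rintro x (rfl | rfl | rfl | rfl) <;>
    simp [toLaurent_K₁, toLaurent_K₂, toLaurent_K₁inv, toLaurent_K₂inv,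
      evalK_mono, K₁z, K₂z]
  exact hle hx

/-- The diagonal matrix with entries `x`, `a x`, `b x`. -/
def diagMat (x : Laurent₂) (a b : ℂ) : Matrix (Fin 3) (Fin 3) Laurent₂ :=
  Matrix.diagonal ![x, a • x, b • x]

lemma diagMat_mul (x y : Laurent₂) (a b a' b' : ℂ) :
    diagMat x a b * diagMat y a' b' = diagMat (x * y) (a * a') (b * b') := by
  rw [diagMat, diagMat, Matrix.diagonal_mul_diagonal, diagMat]
  congr 1
  funext i
  fin_cases i <;> simp [smul_smul, mul_comm]

lemma diagMat_one : diagMat 1 1 1 = 1 := by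
  rw [diagMat, ← Matrix.diagonal_one]
  congr 1
  funext i
  fin_cases i <;> simp

lemma diagonal_mul_matUnit (d : Fin 3 → Laurent₂) (i j : Fin 3) :
    Matrix.diagonal d * Matrix.single i j 1 = Matrix.single i j (d i) := by
  ext k l : 2
  rw [Matrix.diagonal_mul, Matrix.single_apply, Matrix.single_apply]
  split_ifs with h
  · rw [h.1, mul_one]
  · rw [mul_zero]

lemma matUnit_mul_diagonal (d : Fin 3 → Laurent₂) (i j : Fin 3) :
    Matrix.single i j 1 * Matrix.diagonal d = Matrix.single i j (d j) := by
  ext k l : 2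
  rw [Matrix.mul_diagonal, Matrix.single_apply, Matrix.single_apply]
  split_ifs with h
  · rw [h.2, one_mul]
  · rw [zero_mul]

/-- A representation by `3 × 3` matrices over the Laurent polynomials in which `E₁`, `E₂` are the
matrix units in positions `(0, 1)`, `(0, 2)` and the torus is diagonal; the diagonal scalars are
forced by the quasi-commutation relations. -/
def toMat (ρ σ : ℂ) (hρ : ρ ≠ 0) (hσ : σ ≠ 0) :
    Vsl3 ρ σ →ₐ[ℂ] Matrix (Fin 3) (Fin 3) Laurent₂ :=
  RingQuot.liftAlgHom ℂ ⟨FreeAlgebra.lift ℂ ![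
    Matrix.single 0 1 1,
    Matrix.single 0 2 1,
    diagMat (mono 1 0) (ρ * (σ ^ 2)⁻¹)⁻¹ (ρ * σ)⁻¹,
    diagMat (mono (-1) 0) (ρ * (σ ^ 2)⁻¹) (ρ * σ),
    diagMat (mono 0 1) (ρ⁻¹ * σ⁻¹)⁻¹ (ρ ^ 2 * σ⁻¹)⁻¹,
    diagMat (mono 0 (-1)) (ρ⁻¹ * σ⁻¹) (ρ ^ 2 * σ⁻¹)], by
    have h1 : ρ * (σ ^ 2)⁻¹ ≠ 0 := by positivity
    have h2 : ρ * σ ≠ 0 := by positivity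
    have h3 : ρ⁻¹ * σ⁻¹ ≠ 0 := by positivity
    have h4 : ρ ^ 2 * σ⁻¹ ≠ 0 := by positivity
    have p (e₁ e₂ k₁ l₁ k₂ l₂ : Matrix (Fin 3) (Fin 3) Laurent₂) :
        (![e₁, e₂, k₁, l₁, k₂, l₂] : Fin 6 → _) 0 = e₁ ∧
        (![e₁, e₂, k₁, l₁, k₂, l₂] : Fin 6 → _) 1 = e₂ ∧
        (![e₁, e₂, k₁, l₁, k₂, l₂] : Fin 6 → _) 2 = k₁ ∧
        (![e₁, e₂, k₁, l₁, k₂, l₂] : Fin 6 → _) 3 = l₁ ∧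
        (![e₁, e₂, k₁, l₁, k₂, l₂] : Fin 6 → _) 4 = k₂ ∧
        (![e₁, e₂, k₁, l₁, k₂, l₂] : Fin 6 → _) 5 = l₂ := ⟨rfl, rfl, rfl, rfl, rfl, rfl⟩
    intro x y h
    cases h <;>
      simp only [map_mul, map_smul, map_one, map_zero, map_sub, map_add, FreeAlgebra.lift_ι_apply, p]
    · rw [diagMat_mul, inv_mul_cancel₀ h1, inv_mul_cancel₀ h2, mono_mul]; exact diagMat_one
    · rw [diagMat_mul, mul_inv_cancel₀ h1, mul_inv_cancel₀ h2, mono_mul]; exact diagMat_one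
    · rw [diagMat_mul, inv_mul_cancel₀ h3, inv_mul_cancel₀ h4, mono_mul]; exact diagMat_one
    · rw [diagMat_mul, mul_inv_cancel₀ h3, mul_inv_cancel₀ h4, mono_mul]; exact diagMat_one
    · simp only [diagMat_mul, mul_comm]
    · rw [diagMat, diagonal_mul_matUnit, matUnit_mul_diagonal, Matrix.smul_single]
      simp [-mul_inv_rev, smul_smul, mul_inv_cancel₀ h1]
    · rw [diagMat, diagonal_mul_matUnit, matUnit_mul_diagonal, Matrix.smul_single]
      simp [-mul_inv_rev, smul_smul, mul_inv_cancel₀ h2]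
    · rw [diagMat, diagonal_mul_matUnit, matUnit_mul_diagonal, Matrix.smul_single]
      simp [-mul_inv_rev, smul_smul, mul_inv_cancel₀ h3]
    · rw [diagMat, diagonal_mul_matUnit, matUnit_mul_diagonal, Matrix.smul_single]
      simp [-mul_inv_rev, smul_smul, mul_inv_cancel₀ h4]
    · simp
    · simp⟩

section Mat

variable {ρ σ : ℂ}

lemma toMat_E₁ (hρ : ρ ≠ 0) (hσ : σ ≠ 0) :
    toMat ρ σ hρ hσ (vE₁ ρ σ) = Matrix.single 0 1 1 := by simp [toMat, vE₁]
lemma toMat_E₂ (hρ : ρ ≠ 0) (hσ : σ ≠ 0) :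
    toMat ρ σ hρ hσ (vE₂ ρ σ) = Matrix.single 0 2 1 := by simp [toMat, vE₂]

/-- The torus acts by diagonal matrices whose first entry is the Laurent polynomial itself. -/
lemma toMat_torus (hρ : ρ ≠ 0) (hσ : σ ≠ 0) {x : Vsl3 ρ σ} (hx : x ∈ torus ρ σ) :
    ∃ d : Fin 3 → Laurent₂, toMat ρ σ hρ hσ x = Matrix.diagonal d ∧ d 0 = toLaurent ρ σ x := by
  induction hx using Algebra.adjoin_induction with
  | mem x hx =>
    rcases hx with rfl | rfl | rfl | rfl
    · rw [toLaurent_K₁]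
      exact ⟨_, by rw [toMat, K₁, RingQuot.liftAlgHom_mkAlgHom_apply, FreeAlgebra.lift_ι_apply]; rfl,
        rfl⟩
    · rw [toLaurent_K₁inv]
      exact ⟨_, by rw [toMat, K₁inv, RingQuot.liftAlgHom_mkAlgHom_apply,
        FreeAlgebra.lift_ι_apply]; rfl, rfl⟩
    · rw [toLaurent_K₂]
      exact ⟨_, by rw [toMat, K₂, RingQuot.liftAlgHom_mkAlgHom_apply, FreeAlgebra.lift_ι_apply]; rfl,
        rfl⟩
    · rw [toLaurent_K₂inv]
      exact ⟨_, by rw [toMat, K₂inv, RingQuot.liftAlgHom_mkAlgHom_apply,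
        FreeAlgebra.lift_ι_apply]; rfl, rfl⟩
  | algebraMap r =>
    exact ⟨fun _ => algebraMap _ _ r, by
      rw [AlgHom.commutes, Matrix.algebraMap_eq_diagonal]; rfl, by rw [AlgHom.commutes]⟩
  | add x y _ _ ihx ihy =>
    obtain ⟨d, hd, d0⟩ := ihx
    obtain ⟨e, he, e0⟩ := ihy
    exact ⟨fun i => d i + e i, by rw [map_add, hd, he, Matrix.diagonal_add],
      by rw [map_add, ← d0, ← e0]⟩
  | mul x y _ _ ihx ihy =>
    obtain ⟨d, hd, d0⟩ := ihx
    obtain ⟨e, he, e0⟩ := ihy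
    exact ⟨fun i => d i * e i, by rw [map_mul, hd, he, Matrix.diagonal_mul_diagonal],
      by rw [map_mul, ← d0, ← e0]⟩

lemma cancel_E₁ (hρ : ρ ≠ 0) (hσ : σ ≠ 0) {t : Vsl3 ρ σ}
    (ht : t ∈ torus ρ σ) (h : t * vE₁ ρ σ = vE₁ ρ σ) :
    toLaurent ρ σ t = 1 := by
  obtain ⟨d, hd, d0⟩ := toMat_torus hρ hσ ht
  have h2 := congrArg (toMat ρ σ hρ hσ) h
  rw [map_mul, hd, toMat_E₁, diagonal_mul_matUnit] at h2
  rw [← d0]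
  simpa using congrFun (congrFun h2 0) 1

lemma cancel_E₂ (hρ : ρ ≠ 0) (hσ : σ ≠ 0) {t : Vsl3 ρ σ}
    (ht : t ∈ torus ρ σ) (h : t * vE₂ ρ σ = vE₂ ρ σ) :
    toLaurent ρ σ t = 1 := by
  obtain ⟨d, hd, d0⟩ := toMat_torus hρ hσ ht
  have h2 := congrArg (toMat ρ σ hρ hσ) h
  rw [map_mul, hd, toMat_E₂, diagonal_mul_matUnit] at h2
  rw [← d0]
  simpa using congrFun (congrFun h2 0) 2

lemma E₁_ne_zero (hρ : ρ ≠ 0) (hσ : σ ≠ 0) : vE₁ ρ σ ≠ 0 := by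
  intro h
  have h2 := congrArg (toMat ρ σ hρ hσ) h
  rw [toMat_E₁, map_zero] at h2
  simpa using congrFun (congrFun h2 0) 1

end Mat

/-! ### Weights for conjugation by `K₁` -/

/-- The `K₁`-weight of bidegree `(p, q)`, i.e. `p` factors `E₁` and `q` factors `E₂`. -/
def wt (ρ σ : ℂ) (i : ℕ × ℕ) : ℂ := (ρ * (σ ^ 2)⁻¹) ^ i.1 * (ρ * σ) ^ i.2

/-- Conjugation by `K₁`. -/
def conjK (ρ σ : ℂ) : Module.End ℂ (Vsl3 ρ σ) :=
  LinearMap.mulLeft ℂ (K₁ ρ σ) ∘ₗ LinearMap.mulRight ℂ (K₁inv ρ σ)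

section Weights

variable {ρ σ : ℂ}

lemma mem_eigen {v : Vsl3 ρ σ} {c : ℂ} (h : K₁ ρ σ * v = c • (v * K₁ ρ σ)) :
    v ∈ Module.End.eigenspace (conjK ρ σ) c := by
  rw [Module.End.mem_eigenspace_iff]
  change K₁ ρ σ * (v * K₁inv ρ σ) = c • v
  rw [← mul_assoc, h, smul_mul_assoc, mul_assoc, rel_k1inv, mul_one]

/-- The component of bidegree `(p, q)`: elements of the right weight for `K₁`, which in bidegrees
`(0,0)`, `(1,0)`, `(0,1)` are moreover required to have the expected form `t`, `t E₁`, `t E₂` with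
`t` in the torus. -/
def comp (ρ σ : ℂ) (i : ℕ × ℕ) : Submodule ℂ (Vsl3 ρ σ) where
  carrier := {v | K₁ ρ σ * v = wt ρ σ i • (v * K₁ ρ σ) ∧
    (i = (0, 0) → v ∈ torus ρ σ) ∧
    (i = (1, 0) → ∃ t ∈ torus ρ σ, v = t * vE₁ ρ σ) ∧
    (i = (0, 1) → ∃ t ∈ torus ρ σ, v = t * vE₂ ρ σ)}
  zero_mem' := ⟨by simp, fun _ => zero_mem _, fun _ => ⟨0, zero_mem _, by simp⟩,
    fun _ => ⟨0, zero_mem _, by simp⟩⟩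
  add_mem' := by
    rintro v w ⟨h1, h2, h3, h4⟩ ⟨k1, k2, k3, k4⟩
    refine ⟨by rw [mul_add, h1, k1, add_mul, smul_add], fun h => add_mem (h2 h) (k2 h),
      fun h => ?_, fun h => ?_⟩
    · obtain ⟨t, ht, rfl⟩ := h3 h
      obtain ⟨u, hu, rfl⟩ := k3 h
      exact ⟨t + u, add_mem ht hu, by rw [add_mul]⟩
    · obtain ⟨t, ht, rfl⟩ := h4 h
      obtain ⟨u, hu, rfl⟩ := k4 h
      exact ⟨t + u, add_mem ht hu, by rw [add_mul]⟩
  smul_mem' := by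
    rintro c v ⟨h1, h2, h3, h4⟩
    refine ⟨by rw [mul_smul_comm, h1, smul_mul_assoc, smul_comm],
      fun h => Subalgebra.smul_mem _ (h2 h) _, fun h => ?_, fun h => ?_⟩
    · obtain ⟨t, ht, rfl⟩ := h3 h
      exact ⟨c • t, Subalgebra.smul_mem _ ht _, by rw [smul_mul_assoc]⟩
    · obtain ⟨t, ht, rfl⟩ := h4 h
      exact ⟨c • t, Subalgebra.smul_mem _ ht _, by rw [smul_mul_assoc]⟩

lemma comp_le_eigen (i : ℕ × ℕ) :
    comp ρ σ i ≤ Module.End.eigenspace (conjK ρ σ) (wt ρ σ i) :=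
  fun _ hv => mem_eigen hv.1

/-- Left multiplication by a torus element that commutes with `K₁` preserves each component. -/
lemma torus_mul_comp {k : Vsl3 ρ σ} (hk : k ∈ torus ρ σ) (hc : K₁ ρ σ * k = k * K₁ ρ σ)
    {i : ℕ × ℕ} {v : Vsl3 ρ σ} (hv : v ∈ comp ρ σ i) : k * v ∈ comp ρ σ i := by
  obtain ⟨h1, h2, h3, h4⟩ := hv
  refine ⟨?_, fun h => mul_mem hk (h2 h), fun h => ?_, fun h => ?_⟩
  · rw [← mul_assoc, hc, mul_assoc, h1, mul_smul_comm, mul_assoc]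
  · obtain ⟨t, ht, rfl⟩ := h3 h
    exact ⟨k * t, mul_mem hk ht, by rw [mul_assoc]⟩
  · obtain ⟨t, ht, rfl⟩ := h4 h
    exact ⟨k * t, mul_mem hk ht, by rw [mul_assoc]⟩

lemma E₁_mul_comp (hρ : ρ ≠ 0) (hσ : σ ≠ 0) {p q : ℕ} {v : Vsl3 ρ σ}
    (hv : v ∈ comp ρ σ (p, q)) : vE₁ ρ σ * v ∈ comp ρ σ (p + 1, q) := by
  obtain ⟨h1, h2, -, -⟩ := hv
  refine ⟨?_, fun h => by simp at h, fun h => ?_, fun h => by simp at h⟩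
  · rw [← mul_assoc, rel_k1e1, smul_mul_assoc, mul_assoc, h1, mul_smul_comm, smul_smul, ← mul_assoc]
    congr 1
    simp only [wt]; ring
  · obtain ⟨rfl, rfl⟩ : p = 0 ∧ q = 0 := by simpa using h
    exact move_right (by positivity) (by positivity) (rel_k1e1 ρ σ) (rel_k2e1 ρ σ) (h2 rfl)

lemma E₂_mul_comp (hρ : ρ ≠ 0) (hσ : σ ≠ 0) {p q : ℕ} {v : Vsl3 ρ σ}
    (hv : v ∈ comp ρ σ (p, q)) : vE₂ ρ σ * v ∈ comp ρ σ (p, q + 1) := by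
  obtain ⟨h1, h2, -, -⟩ := hv
  refine ⟨?_, fun h => by simp at h, fun h => by simp at h, fun h => ?_⟩
  · rw [← mul_assoc, rel_k1e2, smul_mul_assoc, mul_assoc, h1, mul_smul_comm, smul_smul, ← mul_assoc]
    congr 1
    simp only [wt]; ring
  · obtain ⟨rfl, rfl⟩ : p = 0 ∧ q = 0 := by simpa using h
    exact move_right (by positivity) (by positivity) (rel_k1e2 ρ σ) (rel_k2e2 ρ σ) (h2 rfl)

/-- The components span: their sum contains `1` and is stable under left multiplication by the
generators. -/
lemma iSup_comp (hρ : ρ ≠ 0) (hσ : σ ≠ 0) : ⨆ i, comp ρ σ i = ⊤ := by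
  have step (g : Vsl3 ρ σ) (hg : ∀ i, ∀ v ∈ comp ρ σ i, ∃ j, g * v ∈ comp ρ σ j)
      (n : Vsl3 ρ σ) (hn : n ∈ ⨆ i, comp ρ σ i) : g * n ∈ ⨆ i, comp ρ σ i := by
    have hle : ⨆ i, comp ρ σ i ≤ (⨆ i, comp ρ σ i).comap (LinearMap.mulLeft ℂ g) := by
      refine iSup_le fun i v hv => ?_
      obtain ⟨j, hj⟩ := hg i v hv
      exact Submodule.mem_iSup_of_mem j hj
    exact hle hn
  have torusStep (k : Vsl3 ρ σ) (hk : k ∈ torus ρ σ) (hc : K₁ ρ σ * k = k * K₁ ρ σ) :=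
    step k fun i v hv => ⟨i, torus_mul_comp hk hc hv⟩
  have hc2 : K₁ ρ σ * K₂inv ρ σ = K₂inv ρ σ * K₁ ρ σ := by
    have := mul_inv_of_quasi (c := 1) (rel_k2inv ρ σ) (rel_invk2 ρ σ) (e := K₁ ρ σ)
      (by rw [one_smul, rel_k1k2])
    rwa [one_smul] at this
  have key (w : FreeAlgebra ℂ (Fin 6)) : ∀ n ∈ ⨆ i, comp ρ σ i,
      RingQuot.mkAlgHom ℂ (VRel ρ σ) w * n ∈ ⨆ i, comp ρ σ i := by
    induction w using FreeAlgebra.induction with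
    | grade0 r =>
      intro n hn
      rw [AlgHom.commutes, ← Algebra.smul_def]
      exact Submodule.smul_mem _ _ hn
    | grade1 x =>
      fin_cases x
      · exact step (vE₁ ρ σ) fun i v hv => ⟨_, E₁_mul_comp hρ hσ hv⟩
      · exact step (vE₂ ρ σ) fun i v hv => ⟨_, E₂_mul_comp hρ hσ hv⟩
      · exact torusStep (K₁ ρ σ) K₁_mem rfl
      · exact torusStep (K₁inv ρ σ) K₁inv_mem (by rw [rel_k1inv, rel_invk1])
      · exact torusStep (K₂ ρ σ) K₂_mem (rel_k1k2 ρ σ)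
      · exact torusStep (K₂inv ρ σ) K₂inv_mem hc2
    | mul a b iha ihb =>
      intro n hn
      rw [map_mul, mul_assoc]
      exact iha _ (ihb _ hn)
    | add a b iha ihb =>
      intro n hn
      rw [map_add, add_mul]
      exact add_mem (iha _ hn) (ihb _ hn)
  have h1 : (1 : Vsl3 ρ σ) ∈ ⨆ i, comp ρ σ i :=
    Submodule.mem_iSup_of_mem (0, 0) ⟨by simp [wt], fun _ => one_mem _, fun h => by simp at h,
      fun h => by simp at h⟩
  rw [eq_top_iff]
  intro x _
  obtain ⟨w, rfl⟩ := RingQuot.mkAlgHom_surjective ℂ (VRel ρ σ) x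
  simpa using key w 1 h1

end Weights

/-! ### Separation of weights -/

/-- If submodules of eigenspaces for distinct eigenvalues span, they are the full eigenspaces. -/
lemma eigen_mem_of_iSup {ι V : Type*} [AddCommGroup V] [Module ℂ V] (f : Module.End ℂ V)
    (μ : ι → ℂ) (hμ : Function.Injective μ) (S : ι → Submodule ℂ V)
    (hS : ∀ i, S i ≤ f.eigenspace (μ i)) (htop : ⨆ i, S i = ⊤) (i : ι) {v : V}
    (hv : v ∈ f.eigenspace (μ i)) : v ∈ S i := by
  have hind := (f.eigenspaces_iSupIndep.comp hμ) i
  have hv' : v ∈ S i ⊔ ⨆ (j) (_ : j ≠ i), S j := by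
    have : ⨆ j, S j ≤ S i ⊔ ⨆ (j) (_ : j ≠ i), S j := by
      refine iSup_le fun j => ?_
      by_cases h : j = i
      · subst h; exact le_sup_left
      · exact le_sup_of_le_right (le_iSup₂_of_le j h le_rfl)
    exact this (htop ▸ Submodule.mem_top)
  obtain ⟨s, hs, w, hw, rfl⟩ := Submodule.mem_sup.1 hv'
  have hw1 : w ∈ f.eigenspace (μ i) := by
    have := sub_mem hv (hS i hs)
    rwa [add_sub_cancel_left] at this
  have hw2 : w ∈ ⨆ (j) (_ : j ≠ i), f.eigenspace (μ j) := iSup₂_mono (fun j _ => hS j) hw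
  have hw0 : w = 0 := (Submodule.disjoint_def.1 hind) w hw1 hw2
  rw [hw0, add_zero]; exact hs

/-- If submodules of the eigenspaces for `μ i` span, there are no other eigenvectors. -/
lemma eigen_zero_of_iSup {ι V : Type*} [AddCommGroup V] [Module ℂ V] (f : Module.End ℂ V)
    (μ : ι → ℂ) (S : ι → Submodule ℂ V)
    (hS : ∀ i, S i ≤ f.eigenspace (μ i)) (htop : ⨆ i, S i = ⊤) {c : ℂ} (hc : ∀ i, μ i ≠ c) {v : V}
    (hv : v ∈ f.eigenspace c) : v = 0 := by
  refine (Submodule.disjoint_def.1 (f.eigenspaces_iSupIndep c)) v hv ?_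
  have : ⨆ i, S i ≤ ⨆ (d) (_ : d ≠ c), f.eigenspace d :=
    iSup_le fun i => (hS i).trans (le_iSup₂_of_le (μ i) (hc i) le_rfl)
  exact this (htop ▸ Submodule.mem_top)

section Independence

variable {ρ σ : ℂ}

lemma wt_eq (hρ : ρ ≠ 0) (hσ : σ ≠ 0) (i : ℕ × ℕ) :
    wt ρ σ i = ρ ^ ((i.1 : ℤ) + i.2) * σ ^ ((i.2 : ℤ) - 2 * i.1) := by
  rw [zpow_add₀ hρ, zpow_sub₀ hσ, zpow_mul, wt, mul_pow, mul_pow, inv_pow]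
  simp only [zpow_natCast]
  rw [show (σ ^ (2 : ℤ)) = σ ^ 2 from zpow_natCast σ 2]
  field_simp

/-- Independence passes from the cubes `ρ³, σ³` to `ρ, σ`. -/
lemma indep_root (hρ : ρ ≠ 0) (hσ : σ ≠ 0)
    (hind : ∀ m n : ℤ, (ρ ^ 3) ^ m * (σ ^ 3) ^ n = 1 → m = 0 ∧ n = 0)
    {m n m' n' : ℤ} (h : ρ ^ m * σ ^ n = ρ ^ m' * σ ^ n') : m = m' ∧ n = n' := by
  have h1 : ρ ^ (m - m') * σ ^ (n - n') = 1 := by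
    rw [zpow_sub₀ hρ, zpow_sub₀ hσ, div_mul_div_comm, h, div_self]
    exact mul_ne_zero (zpow_ne_zero _ hρ) (zpow_ne_zero _ hσ)
  have := hind (m - m') (n - n') (by
    have e (x : ℂ) (k : ℤ) : (x ^ 3) ^ k = (x ^ k) ^ 3 := by
      rw [← zpow_natCast, ← zpow_natCast, ← zpow_mul, ← zpow_mul, mul_comm]
    rw [e, e, ← mul_pow, h1, one_pow])
  omega

lemma wt_injective (hρ : ρ ≠ 0) (hσ : σ ≠ 0)
    (hind : ∀ m n : ℤ, (ρ ^ 3) ^ m * (σ ^ 3) ^ n = 1 → m = 0 ∧ n = 0)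
    : Function.Injective (wt ρ σ) := by
  rintro ⟨p, q⟩ ⟨p', q'⟩ h
  rw [wt_eq hρ hσ, wt_eq hρ hσ] at h
  have := indep_root hρ hσ hind h
  simp only at this
  ext <;> simp only <;> omega

lemma weight_E₁ (hρ : ρ ≠ 0) (hσ : σ ≠ 0)
    (hind : ∀ m n : ℤ, (ρ ^ 3) ^ m * (σ ^ 3) ^ n = 1 → m = 0 ∧ n = 0)
    {v : Vsl3 ρ σ} (h : K₁ ρ σ * v = (ρ * (σ ^ 2)⁻¹) • (v * K₁ ρ σ)) :
    ∃ t ∈ torus ρ σ, v = t * vE₁ ρ σ :=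
  (eigen_mem_of_iSup (conjK ρ σ) (wt ρ σ) (wt_injective hρ hσ hind) (comp ρ σ) comp_le_eigen
    (iSup_comp hρ hσ) (1, 0) (mem_eigen (by simpa [wt] using h))).2.2.1 rfl

lemma weight_E₂ (hρ : ρ ≠ 0) (hσ : σ ≠ 0)
    (hind : ∀ m n : ℤ, (ρ ^ 3) ^ m * (σ ^ 3) ^ n = 1 → m = 0 ∧ n = 0)
    {v : Vsl3 ρ σ} (h : K₁ ρ σ * v = (ρ * σ) • (v * K₁ ρ σ)) :
    ∃ t ∈ torus ρ σ, v = t * vE₂ ρ σ :=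
  (eigen_mem_of_iSup (conjK ρ σ) (wt ρ σ) (wt_injective hρ hσ hind) (comp ρ σ) comp_le_eigen
    (iSup_comp hρ hσ) (0, 1) (mem_eigen (by simpa [wt] using h))).2.2.2 rfl

/-- `ρ⁻¹σ⁻¹` is not a weight of `K₁`, since it would need `p + q = -1`. -/
lemma weight_none (hρ : ρ ≠ 0) (hσ : σ ≠ 0)
    (hind : ∀ m n : ℤ, (ρ ^ 3) ^ m * (σ ^ 3) ^ n = 1 → m = 0 ∧ n = 0)
    {v : Vsl3 ρ σ} (h : K₁ ρ σ * v = (ρ⁻¹ * σ⁻¹) • (v * K₁ ρ σ)) : v = 0 := by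
  refine eigen_zero_of_iSup (conjK ρ σ) (wt ρ σ) (comp ρ σ) comp_le_eigen
    (iSup_comp hρ hσ) (fun i hi => ?_) (mem_eigen h)
  rw [wt_eq hρ hσ, ← zpow_neg_one, ← zpow_neg_one] at hi
  have := indep_root hρ hσ hind hi
  omega

end Independence

/-! ### The automorphism -/

/-- If `θ` rescales `K₁, K₂`, and `E` spans its `K₁`-weight space freely over the torus, then
`θ E` is a unit of the torus times `E`. -/
lemma image_of_weight {ρ σ : ℂ} (θ : Vsl3 ρ σ ≃ₐ[ℂ] Vsl3 ρ σ) {a d c : ℂ} (ha : a ≠ 0)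
    (hd : d ≠ 0) (h1 : θ (K₁ ρ σ) = a • K₁ ρ σ) (h2 : θ (K₂ ρ σ) = d • K₂ ρ σ)
    (E : Vsl3 ρ σ) (hE : K₁ ρ σ * E = c • (E * K₁ ρ σ))
    (hwt : ∀ v, K₁ ρ σ * v = c • (v * K₁ ρ σ) → ∃ t ∈ torus ρ σ, v = t * E)
    (hcan : ∀ t ∈ torus ρ σ, t * E = E → toLaurent ρ σ t = 1) :
    ∃ (b : ℂ) (m n : ℤ), b ≠ 0 ∧ θ E = b • (K₁z ρ σ m * K₂z ρ σ n * E) := by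
  -- Any automorphism rescaling `K₁` preserves the `K₁`-weights.
  have pres (φ : Vsl3 ρ σ ≃ₐ[ℂ] Vsl3 ρ σ) (e : ℂ) (he : e ≠ 0) (h : φ (K₁ ρ σ) = e • K₁ ρ σ) :
      K₁ ρ σ * φ E = c • (φ E * K₁ ρ σ) := by
    have := congrArg φ hE
    rw [map_mul, map_smul, map_mul, h, smul_mul_assoc, mul_smul_comm, smul_comm] at this
    exact smul_right_injective _ he this
  have hs : θ.symm (K₁ ρ σ) = a⁻¹ • K₁ ρ σ := by
    rw [AlgEquiv.symm_apply_eq, map_smul, h1, smul_smul, inv_mul_cancel₀ ha, one_smul]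
  obtain ⟨f, hf, hfE⟩ := hwt _ (pres θ a ha h1)
  obtain ⟨g, hg, hgE⟩ := hwt _ (pres θ.symm a⁻¹ (inv_ne_zero ha) hs)
  have hgT : θ g ∈ torus ρ σ := map_torus θ.toAlgHom ha hd h1 h2 hg
  have hEE : θ g * f * E = E := by
    rw [mul_assoc, ← hfE, ← map_mul, ← hgE, AlgEquiv.apply_symm_apply]
  have hu := hcan _ (mul_mem hgT hf) hEE
  rw [map_mul, mul_comm] at hu
  obtain ⟨b, m, n, hb, hfm⟩ := laurent_unit hu
  refine ⟨b, m, n, hb, ?_⟩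
  rw [hfE, ← evalK_toLaurent hf, hfm, map_smul, evalK_mono, smul_mul_assoc]

/-- if a `ℂ`-algebra automorphism `θ` of `Ǔ^{≥0}_{r,s}(sl₃)` satisfies
`θ(K_l) = a_l K_{τ(l)}` for a permutation `τ` of `{1,2}` and `a_l ∈ ℂ*`, then
`θ(E_l) = b_l K₁^{m_l} K₂^{n_l} E_{τ(l)}` for some `b_l ∈ ℂ*` and integers `m_l, n_l`. -/
theorem stmt7 (ρ σ : ℂ) (hρ : ρ ≠ 0) (hσ : σ ≠ 0)
    (hind : ∀ m n : ℤ, (ρ ^ 3) ^ m * (σ ^ 3) ^ n = 1 → m = 0 ∧ n = 0)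
    (θ : Vsl3 ρ σ ≃ₐ[ℂ] Vsl3 ρ σ)
    (τ : Equiv.Perm (Fin 2)) (a : Fin 2 → ℂ) (ha : ∀ l, a l ≠ 0)
    (hK : ∀ l, θ (Kvec ρ σ l) = a l • Kvec ρ σ (τ l)) :
    ∃ (b : Fin 2 → ℂ) (m n : Fin 2 → ℤ),
      (∀ l, b l ≠ 0) ∧
      ∀ l, θ (Evec ρ σ l) = b l • (K₁z ρ σ (m l) * K₂z ρ σ (n l) * Evec ρ σ (τ l)) := by
  have dich : ∀ π : Equiv.Perm (Fin 2), π = 1 ∨ π = Equiv.swap 0 1 := by decide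
  have hK0 : θ (K₁ ρ σ) = a 0 • Kvec ρ σ (τ 0) := hK 0
  have hK1 : θ (K₂ ρ σ) = a 1 • Kvec ρ σ (τ 1) := hK 1
  rcases dich τ with rfl | rfl
  · have h1 : θ (K₁ ρ σ) = a 0 • K₁ ρ σ := hK0
    have h2 : θ (K₂ ρ σ) = a 1 • K₂ ρ σ := hK1
    obtain ⟨b₁, m₁, n₁, hb₁, e₁⟩ := image_of_weight θ (ha 0) (ha 1) h1 h2 (vE₁ ρ σ)
      (rel_k1e1 ρ σ) (fun _ => weight_E₁ hρ hσ hind) (fun _ => cancel_E₁ hρ hσ)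
    obtain ⟨b₂, m₂, n₂, hb₂, e₂⟩ := image_of_weight θ (ha 0) (ha 1) h1 h2 (vE₂ ρ σ)
      (rel_k1e2 ρ σ) (fun _ => weight_E₂ hρ hσ hind) (fun _ => cancel_E₂ hρ hσ)
    refine ⟨![b₁, b₂], ![m₁, m₂], ![n₁, n₂], fun l => ?_, fun l => ?_⟩
    · fin_cases l
      · exact hb₁
      · exact hb₂
    · fin_cases l
      · exact e₁
      · exact e₂
  -- For the transposition, `θ E₁` would have the impossible `K₁`-weight `ρ⁻¹σ⁻¹`.
  · exfalso
    have h2 : θ (K₂ ρ σ) = a 1 • K₁ ρ σ := by rw [hK1, Equiv.swap_apply_right]; rfl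
    have h := congrArg θ (rel_k2e1 ρ σ)
    rw [map_mul, map_smul, map_mul, h2, smul_mul_assoc, mul_smul_comm, smul_comm] at h
    have h0 := weight_none hρ hσ hind (smul_right_injective _ (ha 1) h)
    exact E₁_ne_zero hρ hσ ((map_eq_zero_iff θ θ.injective).1 h0)
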